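/- arXiv:1509.04970 — 2 statements merged into one kernel-verified Lean document; each statement's English description precedes it below -/
import Mathlib

section
/- Let G ⊆ M_n(ℂ) be an irreducible group of matrices. The commutator subgroup [G,G] consists of involutions (matrices J with J² = I) if and only if, up to simultaneous similarity, G is contained in ℂ^×·H, where H is a signed permutation group with commutative pattern and ℂ^×·H denotes the set of all nonzero complex scalar multiples of members of H. -/
open Matrix BigOperators
open scoped Classical

noncomputable section

abbrev Mat (n : ℕ) := Matrix (Fin n) (Fin n) ℂ

/-- A set of matrices is irreducible if the only invariant subspaces are `⊥` and `⊤`. -/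
def IrreducibleSet {n : ℕ} (S : Set (Mat n)) : Prop :=
  ∀ W : Submodule ℂ (Fin n → ℂ),
    (∀ A ∈ S, ∀ v ∈ W, A.mulVec v ∈ W) → W = ⊥ ∨ W = ⊤

/-- All complex eigenvalues are real. -/
def RealSpectrum {n : ℕ} (M : Mat n) : Prop :=
  ∀ z ∈ spectrum ℂ M, z.im = 0

/-- A set of matrices forming a group of invertible matrices under multiplication. -/
def IsMatGroup {n : ℕ} (G : Set (Mat n)) : Prop :=
  (1 : Mat n) ∈ G ∧ (∀ A ∈ G, ∀ B ∈ G, A * B ∈ G) ∧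
    ∀ A ∈ G, IsUnit A ∧ A⁻¹ ∈ G

/-- Monomial matrix: exactly one nonzero entry in each row and each column. -/
def IsMonomialMat {n : ℕ} (M : Mat n) : Prop :=
  (∀ i, ∃! j, M i j ≠ 0) ∧ ∀ j, ∃! i, M i j ≠ 0

/-- Pattern of a matrix: nonzero entries replaced by 1. -/
def patMat {n : ℕ} (M : Mat n) : Mat n :=
  Matrix.of fun i j => if M i j = 0 then 0 else 1

/-- Signed permutation matrix. -/
def IsSignedPermMat {n : ℕ} (M : Mat n) : Prop :=
  IsMonomialMat M ∧ ∀ i j, M i j = 0 ∨ M i j = 1 ∨ M i j = -1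

/-- Permutation matrix associated to `σ` (sending `e j` to `e (σ j)`). -/
def permMat {n : ℕ} (σ : Equiv.Perm (Fin n)) : Mat n :=
  Matrix.of fun i j => if i = σ j then 1 else 0

def IsPermMat {n : ℕ} (M : Mat n) : Prop := ∃ σ : Equiv.Perm (Fin n), M = permMat σ

/-- The cyclic permutation matrix `C_n`, sending `e i` to `e (i+1 mod n)`. -/
def cycMat (n : ℕ) : Mat n :=
  Matrix.of fun i j => if (i : ℕ) = ((j : ℕ) + 1) % n then 1 else 0

/-- The cyclic group `𝒞_n` generated by `C_n`. -/
def cycSet (n : ℕ) : Set (Mat n) := {M | ∃ k : ℕ, M = cycMat n ^ k}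

/-- Signed diagonal matrix: member of `D_n(±1)`. -/
def IsSignedDiag {n : ℕ} (M : Mat n) : Prop :=
  ∃ d : Fin n → ℂ, (∀ i, d i = 1 ∨ d i = -1) ∧ M = Matrix.diagonal d

/-- `avg_G(D) = D · D^G · … · D^(G^(m-1))` where `m = orderOf G` and `D^G = G⁻¹ D G`. -/
def avgMat {n : ℕ} (G D : Mat n) : Mat n :=
  ((List.range (orderOf G)).map fun k => (G ^ k)⁻¹ * D * G ^ k).prod

/-- `J_K = {J ∈ D_n(±1) : avg_G(J) = det(J)·I for all G ∈ K \ {I}}`. -/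
def Jset {n : ℕ} (K : Set (Mat n)) : Set (Mat n) :=
  {J | IsSignedDiag J ∧ ∀ G ∈ K, G ≠ 1 → avgMat G J = J.det • (1 : Mat n)}

/-- `J_K^+ = {J ∈ J_K : det J = 1}`. -/
def JsetPlus {n : ℕ} (K : Set (Mat n)) : Set (Mat n) :=
  {J | J ∈ Jset K ∧ J.det = 1}

/-- Realizable: simultaneously similar to a set of real-entried matrices. -/
def Realizable {n : ℕ} (S : Set (Mat n)) : Prop :=
  ∃ T : Mat n, IsUnit T ∧ ∀ A ∈ S, ∀ i j, ((T⁻¹ * A * T) i j).im = 0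

/-- Indecomposable: no common invariant standard subspace except `0` and `ℂ^n`. -/
def IndecomposableSet {n : ℕ} (S : Set (Mat n)) : Prop :=
  ∀ I : Set (Fin n),
    (∀ A ∈ S, ∀ j ∈ I, ∀ i, A i j ≠ 0 → i ∈ I) → I = ∅ ∨ I = Set.univ

/-- Kronecker product, identified with a matrix over `Fin (m*n)` canonically
(first factor's index is the block index). -/
def kron {m n : ℕ} (A : Mat m) (B : Mat n) : Mat (m * n) :=
  Matrix.reindex finProdFinEquiv finProdFinEquiv (Matrix.kroneckerMap (· * ·) A B)

end

/-!
Extend `[G, G]` to a maximal abelian subgroup `M` of `G`; it is its own centralizer and is normal.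
The group `G / M` permutes the weights of `M` simply transitively: conjugate elements of `G` differ
by elements of `[G, G] ≤ M`, so an element fixing one weight fixes all of them and hence centralizes
`M`. The images of one weight vector under `G` therefore span lines permuted by the abelian group
`G / M`, and `G` is monomial in a basis adapted to them. A weight `χ` has `χ ^ 2 = 1` on `[G, G]`,
so `χ⁻²` descends to `M / [G, G]` and extends, `ℂˣ` being divisible, to a character `ν` of `G`.
Rescaling each `g` and its translate of the weight vector by a square root of `ν g` leaves only
signs. Conversely, scalars cancel in commutators, and these are diagonal with entries `±1`.
-/

open scoped commutatorElement

section GroupTheory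

variable {Γ : Type*} [Group Γ]

theorem exists_le_centralizer_eq_self (N : Subgroup Γ) [IsMulCommutative N] :
    ∃ M : Subgroup Γ, N ≤ M ∧ Subgroup.centralizer (M : Set Γ) = M := by
  obtain ⟨M, hNM, hM⟩ := zorn_le_nonempty₀ {M : Subgroup Γ | IsMulCommutative M} (by
    intro c hc hchain M₀ hM₀
    refine ⟨sSup c, .of_setLike_mul_comm fun a ha b hb => ?_, fun _ => le_sSup⟩
    rw [Subgroup.mem_sSup_of_directedOn ⟨M₀, hM₀⟩ hchain.directedOn] at ha hb
    obtain ⟨S, hS, haS⟩ := ha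
    obtain ⟨T, hT, hbT⟩ := hb
    obtain ⟨U, hU, hSU, hTU⟩ := hchain.directedOn S hS T hT
    have : IsMulCommutative U := hc hU
    exact setLike_mul_comm (hSU haS) (hTU hbT)) N ‹_›
  have : IsMulCommutative M := hM.prop
  refine ⟨M, hNM, le_antisymm (fun g hg => ?_) M.le_centralizer⟩
  have hcomm : IsMulCommutative (Subgroup.closure (insert g (M : Set Γ))) := by
    refine Subgroup.isMulCommutative_closure ?_
    rintro a (rfl | ha) b (rfl | hb)
    · rfl
    · exact (hg b hb).symm
    · exact hg a ha
    · exact setLike_mul_comm ha hb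
  exact hM.le_of_ge hcomm (fun x hx => Subgroup.subset_closure (Set.mem_insert_of_mem g hx))
    (Subgroup.subset_closure (Set.mem_insert g _))

theorem isMulCommutative_of_forall_sq_eq_one (H : Subgroup Γ) (h : ∀ a ∈ H, a ^ 2 = 1) :
    IsMulCommutative H :=
  ⟨⟨Commute.of_orderOf_dvd_two fun a => orderOf_dvd_of_pow_eq_one (Subtype.ext (h a a.2))⟩⟩

theorem commutator_le_commutator_of_forall_eq_mul {G H : Subgroup Γ}
    (h : ∀ a ∈ G, ∃ z ∈ Subgroup.center Γ, ∃ b ∈ H, a = z * b) : ⁅G, G⁆ ≤ ⁅H, H⁆ := by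
  rw [Subgroup.commutator_le]
  intro a ha a' ha'
  obtain ⟨z, hz, b, hb, rfl⟩ := h a ha
  obtain ⟨w, hw, c, hc, rfl⟩ := h a' ha'
  rw [Subgroup.mem_center_iff] at hz hw
  have hcomm : ⁅z * b, w * c⁆ = ⁅b, c⁆ := by
    calc ⁅z * b, w * c⁆ = z * (b * w) * c * b⁻¹ * z⁻¹ * c⁻¹ * w⁻¹ := by
          simp only [commutatorElement_def]; group
      _ = z * w * (b * c * b⁻¹) * z⁻¹ * c⁻¹ * w⁻¹ := by rw [hw b]; group
      _ = w * (z * (b * c * b⁻¹)) * z⁻¹ * c⁻¹ * w⁻¹ := by rw [hw z]; group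
      _ = w * (b * c * b⁻¹ * c⁻¹) * w⁻¹ := by rw [← hz]; group
      _ = ⁅b, c⁆ := by rw [← hw, mul_inv_cancel_right, commutatorElement_def]
  exact hcomm ▸ Subgroup.commutator_mem_commutator hb hc

/-- The factor through `f` is extended from `f.range` to `B` by injectivity of divisible groups. -/
theorem exists_comp_eq_of_ker_le {A B D : Type*} [Group A] [CommGroup B] [CommGroup D]
    (hD : ∀ n : ℕ, n ≠ 0 → Function.Surjective fun d : D => d ^ n)
    (f : A →* B) (φ : A →* D) (h : f.ker ≤ φ.ker) : ∃ ψ : B →* D, ψ.comp f = φ := by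
  let _ : DivisibleBy (Additive D) ℕ := divisibleByOfSMulRightSurj _ _ fun hn => hD _ hn
  let _ : DivisibleBy (Additive D) ℤ := AddGroup.divisibleByIntOfDivisibleByNat _
  have hsurj : Function.Surjective f.rangeRestrict := f.rangeRestrict_surjective
  let φ' : f.range →* D :=
    f.rangeRestrict.liftOfSurjective hsurj ⟨φ, f.ker_rangeRestrict.trans_le h⟩
  have hφ' : φ'.comp f.rangeRestrict = φ := MonoidHom.liftOfRightInverse_comp ..
  obtain ⟨ψ, hψ⟩ := (Module.Baer.of_divisible (Additive D)).extension_property_addMonoidHom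
    (MonoidHom.toAdditive f.range.subtype) Subtype.val_injective (MonoidHom.toAdditive φ')
  refine ⟨MonoidHom.toAdditive.symm ψ, ?_⟩
  ext a
  rw [← hφ']
  exact DFunLike.congr_fun hψ (Additive.ofMul (f.rangeRestrict a))

theorem units_pow_surjective {K : Type*} [Field K] [IsAlgClosed K] {n : ℕ}
    (hn : n ≠ 0) : Function.Surjective fun u : Kˣ => u ^ n := by
  intro u
  obtain ⟨z, hz⟩ := IsAlgClosed.exists_pow_nat_eq (u : K) (Nat.pos_of_ne_zero hn)
  have hunit : IsUnit z := (isUnit_pow_iff hn).mp (hz ▸ u.isUnit)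
  exact ⟨hunit.unit, Units.ext hz⟩

end GroupTheory

section Weights

variable {K V H : Type*} [Field K] [AddCommGroup V] [Module K V] [Group H]

/-- The simultaneous eigenspace on which every `h` acts as the scalar `χ h`. -/
def weightSpace (σ : Representation K H V) (χ : H →* Kˣ) : Submodule K V :=
  ⨅ h, Module.End.eigenspace (σ h) (χ h : K)

theorem mem_weightSpace {σ : Representation K H V} {χ : H →* Kˣ} {v : V} :
    v ∈ weightSpace σ χ ↔ ∀ h, σ h v = χ h • v := by
  simp only [weightSpace, Submodule.mem_iInf, Module.End.mem_eigenspace_iff, Units.smul_def]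

theorem exists_simultaneous_eigenvector [IsAlgClosed K] [FiniteDimensional K V] [Nontrivial V]
    [IsMulCommutative H] (σ : Representation K H V) : ∃ v ≠ 0, ∀ h, ∃ c : K, σ h v = c • v := by
  have : IsArtinian (MonoidAlgebra K H) σ.asModule := isArtinian_of_tower K inferInstance
  have : Nontrivial σ.asModule := ‹Nontrivial V›
  obtain ⟨S, hS⟩ := IsAtomic.exists_atom (Submodule (MonoidAlgebra K H) σ.asModule)
  have : IsSimpleModule (MonoidAlgebra K H) S := isSimpleModule_iff_isAtom.mpr hS
  have : FiniteDimensional K S :=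
    .of_injective (S.subtype.restrictScalars K) Subtype.val_injective
  open scoped IsMulCommutative in
  have hdim : Module.finrank K S = 1 :=
    IsSimpleModule.finrank_eq_one_of_isMulCommutative (MonoidAlgebra K H) S K
  obtain ⟨v, hv, hspan⟩ := finrank_eq_one_iff'.mp hdim
  refine ⟨σ.asModuleEquiv v, by simpa using hv, fun h => ?_⟩
  obtain ⟨c, hc⟩ := hspan (MonoidAlgebra.of K H h • v)
  refine ⟨c, ?_⟩
  calc σ h (σ.asModuleEquiv v) = σ.asModuleEquiv (MonoidAlgebra.of K H h • (v : σ.asModule)) := by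
        rw [σ.asModuleEquiv_map_smul, σ.asAlgebraHom_of]
    _ = c • σ.asModuleEquiv v := congrArg (fun x : S => σ.asModuleEquiv x) hc.symm

theorem exists_weightSpace_ne_bot [IsAlgClosed K] [FiniteDimensional K V] [Nontrivial V]
    [IsMulCommutative H] (σ : Representation K H V) : ∃ χ, weightSpace σ χ ≠ ⊥ := by
  obtain ⟨v, hv, hσ⟩ := exists_simultaneous_eigenvector σ
  choose c hc using hσ
  have hinj {a b : K} (h : a • v = b • v) : a = b := smul_left_injective K hv h
  let χ : H →* K :=
    { toFun := c
      map_one' := hinj (by simp [← hc])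
      map_mul' := fun a b => hinj <| by
        rw [← hc, map_mul, Module.End.mul_apply, hc b, map_smul, hc a, smul_comm, mul_smul] }
  exact ⟨χ.toHomUnits, (Submodule.ne_bot_iff _).mpr ⟨v, mem_weightSpace.mpr hc, hv⟩⟩

theorem iSupIndep_weightSpace [IsMulCommutative H] (σ : Representation K H V) :
    iSupIndep (weightSpace σ) := by
  have hcomm (a b : H) : Commute (σ a) (σ b) := Commute.map (mul_comm' a b) σ
  have hind := Module.End.independent_iInf_maxGenEigenspace_of_forall_mapsTo σ fun a b =>
    Module.End.mapsTo_maxGenEigenspace_of_comm (hcomm b a)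
  have hinj : Function.Injective fun (χ : H →* Kˣ) (h : H) => (χ h : K) := fun χ ψ h =>
    MonoidHom.ext fun a => Units.ext (congrFun h a)
  exact (hind.comp hinj).mono fun χ =>
    iInf_mono fun h => Module.End.eigenspace_le_maxGenEigenspace

end Weights

section Conjugation

variable {K V Γ : Type*} [Field K] [AddCommGroup V] [Module K V] [Group Γ]
  {ρ : Representation K Γ V} {M : Subgroup Γ}

theorem span_range_apply_eq_top [ρ.IsIrreducible] {v : V} (hv : v ≠ 0) :
    Submodule.span K (Set.range fun g => ρ g v) = ⊤ := by
  let W : Subrepresentation ρ :=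
    { toSubmodule := Submodule.span K (Set.range fun g => ρ g v)
      apply_mem_toSubmodule := fun g w hw => by
        refine Submodule.span_le (p := (Submodule.span K _).comap (ρ g)).mpr ?_ hw
        rintro _ ⟨h, rfl⟩
        exact Submodule.subset_span ⟨g * h, by simp⟩ }
  have hvW : v ∈ W.toSubmodule := Submodule.subset_span ⟨1, by simp⟩
  have hW : W ≠ ⊥ := fun h => hv (by simpa [h] using! hvW)
  exact congrArg Subrepresentation.toSubmodule ((eq_bot_or_eq_top W).resolve_left hW)

theorem mem_weightSpace_comp_subtype {χ : M →* Kˣ} {v : V} :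
    v ∈ weightSpace (ρ.comp M.subtype) χ ↔ ∀ m : M, ρ m v = χ m • v :=
  mem_weightSpace

variable [M.Normal]

/-- The character `m ↦ χ (g⁻¹ * m * g)`: the weight of `ρ g v` when `v` has weight `χ`. -/
def conjCharacter (χ : M →* Kˣ) (g : Γ) : M →* Kˣ :=
  χ.comp (MulAut.conjNormal g⁻¹).toMonoidHom

theorem conjCharacter_mul (χ : M →* Kˣ) (g h : Γ) :
    conjCharacter χ (g * h) = conjCharacter (conjCharacter χ h) g := by
  ext m
  simp [conjCharacter]

theorem conjCharacter_of_mem (χ : M →* Kˣ) {g : Γ} (hg : g ∈ M) : conjCharacter χ g = χ := by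
  refine MonoidHom.ext fun m => ?_
  calc χ (MulAut.conjNormal g⁻¹ m) = χ ((⟨g, hg⟩ : M)⁻¹ * m * ⟨g, hg⟩) :=
        congrArg χ (Subtype.ext (by simp))
    _ = χ m := by rw [map_mul, map_mul, map_inv, mul_comm, mul_inv_cancel_left]

theorem apply_mem_weightSpace {χ : M →* Kˣ} {v : V}
    (hv : v ∈ weightSpace (ρ.comp M.subtype) χ) (g : Γ) :
    ρ g v ∈ weightSpace (ρ.comp M.subtype) (conjCharacter χ g) := by
  rw [mem_weightSpace_comp_subtype] at hv ⊢
  intro m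
  have hm : (m : Γ) * g = g * (MulAut.conjNormal g⁻¹ m : M) := by simp [mul_assoc]
  calc ρ m (ρ g v) = ρ g (ρ (MulAut.conjNormal g⁻¹ m : M) v) := by
        simp only [← Module.End.mul_apply, ← map_mul, hm]
    _ = ρ g (conjCharacter χ g m • v) := congrArg (ρ g) (hv _)
    _ = conjCharacter χ g m • ρ g v := LinearMap.map_smul_of_tower ..

/-- Modulo the commutator subgroup `g` fixes every weight `conjCharacter χ h` as soon as it fixes
`χ`, so that `ρ g` commutes with `ρ m` on a spanning set. -/
theorem mem_of_conjCharacter_eq [ρ.IsIrreducible] (hρ : Function.Injective ρ)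
    (hΓ : commutator Γ ≤ M) (hM : Subgroup.centralizer (M : Set Γ) = M) {χ : M →* Kˣ}
    (hχ : weightSpace (ρ.comp M.subtype) χ ≠ ⊥) {g : Γ} (hg : conjCharacter χ g = χ) : g ∈ M := by
  obtain ⟨v, hv, hv0⟩ := (Submodule.ne_bot_iff _).mp hχ
  have hfix (h : Γ) : conjCharacter (conjCharacter χ h) g = conjCharacter χ h := by
    have hmem : ⁅g⁻¹, h⁻¹⁆ ∈ M :=
      hΓ (Subgroup.commutator_mem_commutator (Subgroup.mem_top _) (Subgroup.mem_top _))
    have hgh : g * h = h * (g * ⁅g⁻¹, h⁻¹⁆) := by simp only [commutatorElement_def]; group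
    rw [← conjCharacter_mul, hgh, conjCharacter_mul, conjCharacter_mul,
      conjCharacter_of_mem χ hmem, hg]
  rw [← hM, Subgroup.mem_centralizer_iff]
  intro m hm
  refine hρ (LinearMap.ext_on_range (span_range_apply_eq_top (ρ := ρ) hv0) fun h => ?_)
  have hw := apply_mem_weightSpace (ρ := ρ) hv h
  have hgw := apply_mem_weightSpace (ρ := ρ) hw g
  rw [hfix] at hgw
  rw [mem_weightSpace_comp_subtype] at hw hgw
  simp only [map_mul, Module.End.mul_apply]
  calc ρ m (ρ g (ρ h v)) = conjCharacter χ h ⟨m, hm⟩ • ρ g (ρ h v) := hgw ⟨m, hm⟩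
    _ = ρ g (conjCharacter χ h ⟨m, hm⟩ • ρ h v) := (LinearMap.map_smul_of_tower ..).symm
    _ = ρ g (ρ m (ρ h v)) := congrArg (ρ g) (hw ⟨m, hm⟩).symm

end Conjugation

section Rescaling

variable {K V Γ : Type*} [Field K] [AddCommGroup V] [Module K V] [Group Γ]
  {ρ : Representation K Γ V} {M : Subgroup Γ} {χ : M →* Kˣ}

theorem injective_conjCharacter_out [M.Normal] [ρ.IsIrreducible] (hρ : Function.Injective ρ)
    (hΓ : commutator Γ ≤ M) (hM : Subgroup.centralizer (M : Set Γ) = M)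
    (hχ : weightSpace (ρ.comp M.subtype) χ ≠ ⊥) :
    Function.Injective fun q : Γ ⧸ M => conjCharacter χ q.out := by
  intro p q hpq
  dsimp only at hpq
  have hfix : conjCharacter χ (p.out⁻¹ * q.out) = χ := by
    rw [conjCharacter_mul, ← hpq, ← conjCharacter_mul, inv_mul_cancel,
      conjCharacter_of_mem χ M.one_mem]
  rw [← p.out_eq', ← q.out_eq']
  exact QuotientGroup.eq.mpr (mem_of_conjCharacter_eq hρ hΓ hM hχ hfix)

theorem linearIndependent_of_mem_weightSpace_conjCharacter [M.Normal] [IsMulCommutative M]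
    [ρ.IsIrreducible] (hρ : Function.Injective ρ) (hΓ : commutator Γ ≤ M)
    (hM : Subgroup.centralizer (M : Set Γ) = M) (hχ : weightSpace (ρ.comp M.subtype) χ ≠ ⊥)
    {b : Γ ⧸ M → V} (hb : ∀ q, b q ∈ weightSpace (ρ.comp M.subtype) (conjCharacter χ q.out))
    (hb0 : ∀ q, b q ≠ 0) : LinearIndependent K b :=
  ((iSupIndep_weightSpace (ρ.comp M.subtype)).comp
    (injective_conjCharacter_out hρ hΓ hM hχ)).linearIndependent _ hb hb0

theorem exists_character_mul_sq_eq_one [IsAlgClosed K] (hΓ : ∀ a ∈ commutator Γ, a ^ 2 = 1)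
    (χ : M →* Kˣ) : ∃ ν : Γ →* Kˣ, ∀ m : M, ν m * χ m ^ 2 = 1 := by
  have hker : (Abelianization.of.comp M.subtype).ker ≤ ((χ ^ 2)⁻¹).ker := by
    intro m hm
    have hmem : (m : Γ) ∈ commutator Γ := by rwa [← Abelianization.ker_of]
    have hm2 : m ^ 2 = 1 := Subtype.ext (hΓ m hmem)
    rw [MonoidHom.mem_ker, MonoidHom.inv_apply, MonoidHom.pow_apply, ← map_pow, hm2, map_one,
      inv_one]
  obtain ⟨ψ, hψ⟩ := exists_comp_eq_of_ker_le (fun n hn => units_pow_surjective hn) _ _ hker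
  refine ⟨ψ.comp Abelianization.of, fun m => ?_⟩
  have hm : ψ (Abelianization.of (m : Γ)) = (χ m ^ 2)⁻¹ := DFunLike.congr_fun hψ m
  rw [MonoidHom.comp_apply, hm, inv_mul_cancel]

theorem smul_mem_orbit_of_sq_eq {a b : Kˣ} (h : a ^ 2 = b ^ 2) (x : V) :
    a • x ∈ MulAction.orbit ℤˣ (b • x) := by
  have hab : (a : K) = b ∨ (a : K) = -b := sq_eq_sq_iff_eq_or_eq_neg.mp (by exact_mod_cast h)
  rcases hab with hab | hab
  · exact ⟨1, by simp [Units.smul_def, hab]⟩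
  · exact ⟨-1, by simp [Units.smul_def, hab]⟩

variable {ν : Γ →* Kˣ} {r : Γ → Kˣ}

theorem smul_apply_smul_mem_orbit (hr : ∀ g, r g ^ 2 = ν g) (v : V) (g h : Γ) :
    r g • ρ g (r h • ρ h v) ∈ MulAction.orbit ℤˣ (r (g * h) • ρ (g * h) v) := by
  have hsq : (r g * r h) ^ 2 = r (g * h) ^ 2 := by rw [mul_pow, hr, hr, hr, map_mul]
  rw [LinearMap.map_smul_of_tower, ← mul_smul, map_mul]
  exact smul_mem_orbit_of_sq_eq hsq _

theorem smul_apply_mul_mem_orbit (hr : ∀ g, r g ^ 2 = ν g) (hν : ∀ m : M, ν m * χ m ^ 2 = 1)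
    {v : V} (hv : v ∈ weightSpace (ρ.comp M.subtype) χ) (g : Γ) (m : M) :
    r (g * m) • ρ (g * m) v ∈ MulAction.orbit ℤˣ (r g • ρ g v) := by
  have hsq : (r (g * m) * χ m) ^ 2 = r g ^ 2 := by
    rw [mul_pow, hr, hr, map_mul, mul_assoc, hν, mul_one]
  rw [map_mul, Module.End.mul_apply, mem_weightSpace_comp_subtype.mp hv,
    LinearMap.map_smul_of_tower, ← mul_smul]
  exact smul_mem_orbit_of_sq_eq hsq _

theorem smul_apply_out_mem_orbit (hr : ∀ g, r g ^ 2 = ν g) (hν : ∀ m : M, ν m * χ m ^ 2 = 1)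
    {v : V} (hv : v ∈ weightSpace (ρ.comp M.subtype) χ) (g : Γ) :
    r (g : Γ ⧸ M).out • ρ (g : Γ ⧸ M).out v ∈ MulAction.orbit ℤˣ (r g • ρ g v) := by
  obtain ⟨m, hm⟩ := QuotientGroup.mk_out_eq_mul M g
  rw [hm]
  exact smul_apply_mul_mem_orbit hr hν hv g m

theorem span_range_smul_apply_out_eq_top [ρ.IsIrreducible] (hr : ∀ g, r g ^ 2 = ν g)
    (hν : ∀ m : M, ν m * χ m ^ 2 = 1) {v : V} (hv : v ∈ weightSpace (ρ.comp M.subtype) χ)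
    (hv0 : v ≠ 0) :
    Submodule.span K (Set.range fun q : Γ ⧸ M => r q.out • ρ q.out v) = ⊤ := by
  rw [← top_le_iff, ← span_range_apply_eq_top (ρ := ρ) hv0, Submodule.span_le,
    Set.range_subset_iff]
  intro g
  obtain ⟨ε, hε⟩ := smul_apply_out_mem_orbit hr hν hv g
  have hg : ρ g v = (r g)⁻¹ • ε⁻¹ • r (g : Γ ⧸ M).out • ρ (g : Γ ⧸ M).out v := by
    rw [← hε, inv_smul_smul, inv_smul_smul]
  rw [SetLike.mem_coe, hg]
  exact Submodule.smul_of_tower_mem _ _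
    (Submodule.smul_of_tower_mem _ _ (Submodule.subset_span ⟨_, rfl⟩))

theorem exists_basis_smul_apply_mem_orbit [IsAlgClosed K] [FiniteDimensional K V]
    [ρ.IsIrreducible] (hρ : Function.Injective ρ) (hΓ : ∀ a ∈ commutator Γ, a ^ 2 = 1) :
    ∃ M : Subgroup Γ, commutator Γ ≤ M ∧ ∃ b : Module.Basis (Γ ⧸ M) K V,
      ∀ g, ∃ c : Kˣ, ∀ q, c • ρ g (b q) ∈ MulAction.orbit ℤˣ (b (g • q)) := by
  have := isMulCommutative_of_forall_sq_eq_one _ hΓ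
  have : Nontrivial V :=
    (Submodule.nontrivial_iff K).mp (Subrepresentation.toSubmodule_injective (ρ := ρ)).nontrivial
  obtain ⟨M, hΓM, hM⟩ := exists_le_centralizer_eq_self (commutator Γ)
  have : IsMulCommutative M := Subgroup.le_centralizer_iff_isMulCommutative.mp hM.ge
  have : M.Normal := .of_commutator_le Γ hΓM
  obtain ⟨χ, hχ⟩ := exists_weightSpace_ne_bot (ρ.comp M.subtype)
  obtain ⟨v, hv, hv0⟩ := (Submodule.ne_bot_iff _).mp hχ
  obtain ⟨ν, hν⟩ := exists_character_mul_sq_eq_one hΓ χ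
  choose r hr using fun g => units_pow_surjective two_ne_zero (ν g)
  let u (g : Γ) : V := r g • ρ g v
  have hu0 (g : Γ) : u g ≠ 0 := by
    simpa [u, Units.smul_def] using (ρ.apply_bijective g).injective.ne hv0
  have hli : LinearIndependent K fun q : Γ ⧸ M => u q.out :=
    linearIndependent_of_mem_weightSpace_conjCharacter hρ hΓM hM hχ
      (fun q => Submodule.smul_of_tower_mem _ _ (apply_mem_weightSpace hv _)) fun q => hu0 q.out
  refine ⟨M, hΓM,
    .mk hli (span_range_smul_apply_out_eq_top hr hν hv hv0).ge, fun g => ⟨r g, fun q => ?_⟩⟩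
  rw [Module.Basis.mk_apply, Module.Basis.mk_apply]
  have hgq : QuotientGroup.mk (g * q.out) = g • q := MulAction.Quotient.coe_smul_out M g q
  rw [← hgq,
    MulAction.orbit_eq_iff.mpr (smul_apply_out_mem_orbit hr hν hv (g * q.out))]
  exact smul_apply_smul_mem_orbit hr v g q.out

end Rescaling

section SignedPermutations

/-- The hyperoctahedral group: a sign for each row, together with a permutation. -/
abbrev SignedPerm (ι : Type*) := (ι → ℤˣ) ⋊[mulAutArrow] Equiv.Perm ι

variable {ι : Type*}

theorem SignedPerm.sq_eq_one_of_mem_commutator {P : Subgroup (Equiv.Perm ι)}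
    [IsMulCommutative P] {S : Subgroup (SignedPerm ι)}
    (hS : S ≤ P.comap SemidirectProduct.rightHom) {x : SignedPerm ι} (hx : x ∈ ⁅S, S⁆) :
    x ^ 2 = 1 := by
  have hP : ⁅P, P⁆ = ⊥ := Subgroup.commutator_eq_bot_iff_le_centralizer.mpr P.le_centralizer
  have hright : SemidirectProduct.rightHom x ∈ ⁅P, P⁆ := by
    have hmap := Subgroup.map_le_iff_le_comap.mpr hS
    refine Subgroup.commutator_mono hmap hmap ?_
    rw [← Subgroup.map_commutator]
    exact Subgroup.mem_map_of_mem _ hx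
  rw [hP, Subgroup.mem_bot] at hright
  obtain ⟨s, rfl⟩ : x ∈ SemidirectProduct.inl.range := by
    rwa [SemidirectProduct.range_inl_eq_ker_rightHom]
  have hs : s ^ 2 = 1 := funext fun i => Int.units_sq (s i)
  rw [← map_pow, hs, map_one]

variable [Fintype ι] [DecidableEq ι] (K : Type*) [Field K]

/-- The monomial matrix with pattern `x.right` and signs `x.left`, the signs indexed by rows. -/
def signedPermHom : SignedPerm ι →* Matrix ι ι K where
  toFun x := Matrix.of fun i j => if i = x.right j then ((x.left i : ℤ) : K) else 0
  map_one' := by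
    ext i j
    simp [Matrix.one_apply]
  map_mul' x y := by
    ext i j
    have hleft : (x * y).left i = x.left i * y.left (x.right⁻¹ i) := rfl
    simp only [Matrix.of_apply, Matrix.mul_apply, mul_ite, mul_zero, Finset.sum_ite_eq',
      Finset.mem_univ, if_true, SemidirectProduct.mul_right, Equiv.Perm.mul_apply, hleft]
    split_ifs with h
    · simp [h]
    · exact (zero_mul _).symm

/-- The group of all signed permutation matrices with pattern in `P`. -/
def signedPermGroup (P : Subgroup (Equiv.Perm ι)) : Subgroup (GL ι K) :=
  (P.comap SemidirectProduct.rightHom).map (signedPermHom K).toHomUnits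

variable {K}

theorem signedPermHom_apply (x : SignedPerm ι) (i j : ι) :
    signedPermHom K x i j = if i = x.right j then ((x.left i : ℤ) : K) else 0 :=
  rfl

theorem sq_eq_one_of_mem_commutator_signedPermGroup {P : Subgroup (Equiv.Perm ι)}
    [IsMulCommutative P] {A : GL ι K} (hA : A ∈ ⁅signedPermGroup K P, signedPermGroup K P⁆) :
    A ^ 2 = 1 := by
  rw [signedPermGroup, ← Subgroup.map_commutator] at hA
  obtain ⟨x, hx, rfl⟩ := hA
  rw [← map_pow, SignedPerm.sq_eq_one_of_mem_commutator le_rfl hx, map_one]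

theorem conj_eq_scalar_mul_signedPermHom {T A : GL ι K} {c : Kˣ} {x : SignedPerm ι}
    (h : ∀ j, c • A.val *ᵥ T.val.col j = x.left (x.right j) • T.val.col (x.right j)) :
    T⁻¹ * A * T =
      Matrix.GeneralLinearGroup.scalar ι c⁻¹ * (signedPermHom K).toHomUnits x := by
  have hmul : c • (A.val * T.val) = T.val * signedPermHom K x := by
    ext i j
    calc (c • (A.val * T.val)) i j = (c • A.val *ᵥ T.val.col j) i := rfl
      _ = (T.val * signedPermHom K x) i j := by
        rw [h]
        simp [Matrix.mul_apply, signedPermHom_apply, Units.smul_def, mul_comm]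
  have hAT : A.val * T.val = c⁻¹ • (T.val * signedPermHom K x) := by rw [← hmul, inv_smul_smul]
  rw [mul_assoc, inv_mul_eq_iff_eq_mul]
  ext : 1
  rw [Units.val_mul, hAT, Units.val_mul, Units.val_mul, Matrix.GeneralLinearGroup.coe_scalar,
    Matrix.scalar_apply, ← Matrix.smul_eq_diagonal_mul, Matrix.mul_smul, Units.smul_def,
    MonoidHom.coe_toHomUnits]

end SignedPermutations

section Matrices

variable {K ι : Type*} [Field K] [Fintype ι] [DecidableEq ι]

/-- The action of a group of matrices on column vectors. -/
def standardRep (G : Subgroup (GL ι K)) : Representation K G (ι → K) :=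
  (Matrix.toLinAlgEquiv' : Matrix ι ι K ≃ₐ[K] _).toMonoidHom.comp
    ((Units.coeHom _).comp G.subtype)

theorem injective_standardRep (G : Subgroup (GL ι K)) : Function.Injective (standardRep G) :=
  Matrix.toLinAlgEquiv'.injective.comp (Units.val_injective.comp Subtype.val_injective)

theorem isIrreducible_standardRep [Nonempty ι] {G : Subgroup (GL ι K)}
    (hG : ∀ W : Submodule K (ι → K), (∀ A ∈ G, ∀ v ∈ W, A.val *ᵥ v ∈ W) → W = ⊥ ∨ W = ⊤) :
    (standardRep G).IsIrreducible where
  exists_pair_ne := ⟨⊥, ⊤, fun h => bot_ne_top (congrArg Subrepresentation.toSubmodule h)⟩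
  eq_bot_or_eq_top W :=
    (hG W.toSubmodule fun A hA _ hv => W.apply_mem_toSubmodule ⟨A, hA⟩ hv).imp
      (fun h => Subrepresentation.toSubmodule_injective h)
      (fun h => Subrepresentation.toSubmodule_injective h)

theorem isMulCommutative_range_toPermHom {Γ : Type*} [Group Γ] {M : Subgroup Γ}
    (hM : commutator Γ ≤ M) : IsMulCommutative (MulAction.toPermHom Γ (Γ ⧸ M)).range := by
  have : M.Normal := .of_commutator_le Γ hM
  have : IsMulCommutative (Γ ⧸ M) := Subgroup.Normal.quotient_commutative_iff_commutator_le.mpr hM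
  refine .of_setLike_mul_comm ?_
  rintro _ ⟨g, rfl⟩ _ ⟨h, rfl⟩
  rw [← map_mul, ← map_mul]
  refine Equiv.ext fun q => ?_
  obtain ⟨k, rfl⟩ := q.mk_surjective
  calc (g : Γ ⧸ M) * h * k = h * g * k := by rw [mul_comm' (g : Γ ⧸ M)]

theorem sq_eq_one_of_mem_commutator_of_conj_mem {G : Subgroup (GL ι K)} {T : GL ι K}
    {P : Subgroup (Equiv.Perm ι)} [IsMulCommutative P]
    (hG : ∀ A ∈ G, ∃ c : Kˣ, ∃ B ∈ signedPermGroup K P,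
      T⁻¹ * A * T = Matrix.GeneralLinearGroup.scalar ι c * B)
    {A : GL ι K} (hA : A ∈ ⁅G, G⁆) : A ^ 2 = 1 := by
  let conj : GL ι K →* GL ι K := (MulAut.conj T⁻¹).toMonoidHom
  have hcomm : conj A ∈ ⁅signedPermGroup K P, signedPermGroup K P⁆ := by
    have hmap : conj A ∈ ⁅G.map conj, G.map conj⁆ := by
      rw [← Subgroup.map_commutator]
      exact Subgroup.mem_map_of_mem conj hA
    refine commutator_le_commutator_of_forall_eq_mul ?_ hmap
    rintro _ ⟨X, hX, rfl⟩
    obtain ⟨c, B, hB, hXB⟩ := hG X hX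
    refine ⟨Matrix.GeneralLinearGroup.scalar ι c, ?_, B, hB, by simpa [conj] using hXB⟩
    rw [Matrix.GeneralLinearGroup.center_eq_range_scalar]
    exact ⟨c, rfl⟩
  apply (MulAut.conj T⁻¹).injective
  rw [map_pow, map_one]
  exact sq_eq_one_of_mem_commutator_signedPermGroup hcomm

theorem exists_conj_mem_signedPermGroup [IsAlgClosed K] {G : Subgroup (GL ι K)}
    [(standardRep G).IsIrreducible] (hsq : ∀ A ∈ ⁅G, G⁆, A ^ 2 = 1) :
    ∃ (T : GL ι K) (P : Subgroup (Equiv.Perm ι)), IsMulCommutative P ∧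
      ∀ A ∈ G, ∃ c : Kˣ, ∃ B ∈ signedPermGroup K P,
        T⁻¹ * A * T = Matrix.GeneralLinearGroup.scalar ι c * B := by
  have hΓ (a : G) (ha : a ∈ commutator G) : a ^ 2 = 1 := by
    refine Subtype.ext (hsq a ?_)
    rw [← Subgroup.map_subtype_commutator]
    exact Subgroup.mem_map_of_mem _ ha
  obtain ⟨M, hM, b, hb⟩ := exists_basis_smul_apply_mem_orbit (injective_standardRep G) hΓ
  let e : G ⧸ M ≃ ι := b.indexEquiv (Pi.basisFun K ι)
  let T : GL ι K := ⟨(Pi.basisFun K ι).toMatrix (b.reindex e),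
    (b.reindex e).toMatrix (Pi.basisFun K ι),
    Module.Basis.toMatrix_mul_toMatrix_flip .., Module.Basis.toMatrix_mul_toMatrix_flip ..⟩
  have hT (j : ι) : T.val.col j = b (e.symm j) := by
    ext i
    simp [T, Module.Basis.toMatrix_apply]
  have := isMulCommutative_range_toPermHom hM
  refine ⟨T, (MulAction.toPermHom G (G ⧸ M)).range.map e.permCongrHom.toMonoidHom, inferInstance,
    fun A hA => ?_⟩
  let g : G := ⟨A, hA⟩
  obtain ⟨c, hc⟩ := hb g
  choose ε hε using hc
  let x : SignedPerm ι :=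
    ⟨fun i => ε (g⁻¹ • e.symm i), e.permCongrHom (MulAction.toPermHom G (G ⧸ M) g)⟩
  refine ⟨c⁻¹, _, ⟨x, ⟨_, ⟨g, rfl⟩, rfl⟩, rfl⟩, conj_eq_scalar_mul_signedPermHom fun j => ?_⟩
  have hright : e.symm (x.right j) = g • e.symm j := by simp [x]
  have hleft : x.left (x.right j) = ε (e.symm j) := by simp only [x, hright, inv_smul_smul]
  rw [hT, hT, hleft, hright]
  exact (hε (e.symm j)).symm

theorem stmt14_general [IsAlgClosed K] (G : Subgroup (GL ι K))
    (hG : ∀ W : Submodule K (ι → K), (∀ A ∈ G, ∀ v ∈ W, A.val *ᵥ v ∈ W) → W = ⊥ ∨ W = ⊤) :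
    (∀ A ∈ ⁅G, G⁆, A ^ 2 = 1) ↔ ∃ (T : GL ι K) (P : Subgroup (Equiv.Perm ι)),
      IsMulCommutative P ∧ ∀ A ∈ G, ∃ c : Kˣ, ∃ B ∈ signedPermGroup K P,
        T⁻¹ * A * T = Matrix.GeneralLinearGroup.scalar ι c * B := by
  constructor
  · intro hsq
    cases isEmpty_or_nonempty ι
    · exact ⟨1, ⊥, inferInstance, fun A _ => ⟨1, 1, one_mem _, Subsingleton.elim _ _⟩⟩
    · have := isIrreducible_standardRep hG
      exact exists_conj_mem_signedPermGroup hsq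
  · rintro ⟨T, P, _, hTP⟩ A hA
    exact sq_eq_one_of_mem_commutator_of_conj_mem hTP hA

end Matrices

section ComplexMatrices

variable {n : ℕ}

theorem isMatGroup_image_val (S : Subgroup (Mat n)ˣ) :
    IsMatGroup ((fun u : (Mat n)ˣ => (u : Mat n)) '' S) := by
  refine ⟨⟨1, S.one_mem, rfl⟩, ?_, ?_⟩
  · rintro _ ⟨A, hA, rfl⟩ _ ⟨B, hB, rfl⟩
    exact ⟨A * B, S.mul_mem hA hB, rfl⟩
  · rintro _ ⟨A, hA, rfl⟩
    exact ⟨A.isUnit, A⁻¹, S.inv_mem hA, Matrix.coe_units_inv A⟩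

theorem isSignedPermMat_signedPermHom (x : SignedPerm (Fin n)) :
    IsSignedPermMat (signedPermHom ℂ x) := by
  refine ⟨⟨fun i => ⟨x.right.symm i, ?_, fun j hj => ?_⟩,
    fun j => ⟨x.right j, ?_, fun i hi => ?_⟩⟩, fun i j => ?_⟩
  · simp [signedPermHom_apply]
  · simp_all [signedPermHom_apply]
  · simp [signedPermHom_apply]
  · simp_all [signedPermHom_apply]
  · rw [signedPermHom_apply]
    rcases Int.units_eq_one_or (x.left i) with h | h <;> split_ifs <;> simp [h]

theorem exists_signedPermHom_eq {A : Mat n} (hA : IsSignedPermMat A) :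
    ∃ x, signedPermHom ℂ x = A := by
  obtain ⟨⟨hrow, hcol⟩, hval⟩ := hA
  choose f hf hf_unique using hcol
  have hinj : Function.Injective f := fun j k hjk =>
    (hrow (f j)).unique (hf j) (hjk ▸ hf k)
  let σ : Equiv.Perm (Fin n) := Equiv.ofBijective f (Finite.injective_iff_bijective.mp hinj)
  have hsign (i : Fin n) : ∃ s : ℤˣ, A i (σ.symm i) = ((s : ℤ) : ℂ) := by
    have hσ : f (σ.symm i) = i := σ.apply_symm_apply i
    have hne : A i (σ.symm i) ≠ 0 := by simpa only [hσ] using hf (σ.symm i)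
    rcases (hval i (σ.symm i)).resolve_left hne with h | h
    · exact ⟨1, by simp [h]⟩
    · exact ⟨-1, by simp [h]⟩
  choose s hs using hsign
  refine ⟨⟨s, σ⟩, ?_⟩
  ext i j
  rw [signedPermHom_apply]
  split_ifs with h
  · rw [← hs, h, σ.symm_apply_apply]
  · by_contra h0
    exact h (hf_unique j i (Ne.symm h0))

theorem patMat_signedPermHom (x : SignedPerm (Fin n)) :
    patMat (signedPermHom ℂ x) = permMat x.right := by
  ext i j
  by_cases h : i = x.right j <;> simp [patMat, permMat, signedPermHom_apply, h]

theorem permMat_mul (σ τ : Equiv.Perm (Fin n)) : permMat σ * permMat τ = permMat (σ * τ) := by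
  ext i j
  by_cases h : i = σ (τ j) <;> simp [permMat, Matrix.mul_apply, h]

theorem permMat_injective : Function.Injective (permMat : Equiv.Perm (Fin n) → Mat n) := by
  intro σ τ h
  ext j : 1
  have hj := congrFun (congrFun h (σ j)) j
  by_contra hne
  simp [permMat, hne] at hj

theorem exists_conj_mem_signedPermGroup_iff {G : Subgroup (Mat n)ˣ} :
    (∃ (T : GL (Fin n) ℂ) (P : Subgroup (Equiv.Perm (Fin n))), IsMulCommutative P ∧
      ∀ A ∈ G, ∃ c : ℂˣ, ∃ B ∈ signedPermGroup ℂ P,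
        T⁻¹ * A * T = Matrix.GeneralLinearGroup.scalar (Fin n) c * B) ↔
      ∃ (T : Mat n) (H : Set (Mat n)), IsUnit T ∧ IsMatGroup H ∧
        (∀ M ∈ H, IsSignedPermMat M) ∧
        (∀ A ∈ H, ∀ B ∈ H, patMat A * patMat B = patMat B * patMat A) ∧
        ∀ A ∈ G, ∃ c : ℂ, c ≠ 0 ∧ ∃ M ∈ H, T⁻¹ * (A : Mat n) * T = c • M := by
  constructor
  · rintro ⟨T, P, _, hTP⟩
    refine ⟨T, _, T.isUnit, isMatGroup_image_val (signedPermGroup ℂ P), ?_, ?_, fun A hA => ?_⟩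
    · rintro _ ⟨_, ⟨x, -, rfl⟩, rfl⟩
      exact isSignedPermMat_signedPermHom x
    · rintro _ ⟨_, ⟨x, hx, rfl⟩, rfl⟩ _ ⟨_, ⟨y, hy, rfl⟩, rfl⟩
      have hxy : x.right * y.right = y.right * x.right := setLike_mul_comm (s := P) hx hy
      simp only [MonoidHom.coe_toHomUnits, patMat_signedPermHom, permMat_mul, hxy]
    · obtain ⟨c, B, hB, hAB⟩ := hTP A hA
      refine ⟨c, c.ne_zero, B, ⟨B, hB, rfl⟩, ?_⟩
      simpa [← Matrix.smul_eq_diagonal_mul] using congrArg Units.val hAB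
  · rintro ⟨T, H, hT, -, hH, hcomm, hTH⟩
    let P := Subgroup.closure {σ | ∃ M ∈ H, patMat M = permMat σ}
    have hP : IsMulCommutative P := by
      refine Subgroup.isMulCommutative_closure ?_
      rintro σ ⟨A, hA, hAσ⟩ τ ⟨B, hB, hBτ⟩
      apply permMat_injective
      rw [← permMat_mul, ← permMat_mul, ← hAσ, ← hBτ, hcomm A hA B hB]
    refine ⟨hT.unit, P, hP, fun A hA => ?_⟩
    obtain ⟨c, hc, M, hM, hAM⟩ := hTH A hA
    obtain ⟨x, rfl⟩ := exists_signedPermHom_eq (hH M hM)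
    have hx : x.right ∈ P := Subgroup.subset_closure ⟨_, hM, patMat_signedPermHom x⟩
    refine ⟨Units.mk0 c hc, _, ⟨x, hx, rfl⟩, ?_⟩
    ext : 1
    simpa [← Matrix.smul_eq_diagonal_mul] using hAM

end ComplexMatrices

/-- For an irreducible matrix group `G`, the commutator subgroup
`[G,G]` consists of involutions iff, up to simultaneous similarity, `G ⊆ ℂ^×·H`
for some signed permutation group `H` with commutative pattern. -/
theorem stmt14 {n : ℕ} (G : Subgroup (Mat n)ˣ)
    (hirr : IrreducibleSet ((fun u : (Mat n)ˣ => (u : Mat n)) '' G)) :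
    (∀ A ∈ ⁅G, G⁆, (A : Mat n) ^ 2 = 1) ↔
      ∃ (T : Mat n) (H : Set (Mat n)), IsUnit T ∧ IsMatGroup H ∧
        (∀ M ∈ H, IsSignedPermMat M) ∧
        (∀ A ∈ H, ∀ B ∈ H, patMat A * patMat B = patMat B * patMat A) ∧
        ∀ A ∈ G, ∃ c : ℂ, c ≠ 0 ∧ ∃ M ∈ H, T⁻¹ * (A : Mat n) * T = c • M := by
  rw [← exists_conj_mem_signedPermGroup_iff,
    ← stmt14_general G fun W hW => hirr W (Set.forall_mem_image.mpr hW)]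
  exact forall₂_congr fun A _ => by rw [Units.ext_iff, Units.val_pow_eq_pow_val, Units.val_one]
end

section
/- Let n be odd and let G = 𝒞_n·J_n. If G ∈ G is not diagonal and X, Y ∈ G are diagonal elements with det X = det Y, then the matrix (X − Y)·G is nilpotent. -/
open Matrix BigOperators
open scoped Classical

/-!
Let `P` be the permutation matrix of `σ`, and let `m` be its order. For `D = diagonal d`, both
`avgMat P D` and `(P * D) ^ m` are the diagonal matrix whose `j`-th entry is the orbit product
`∏ k < m, d (σ ^ k j)`, and orbit products are multiplicative in `d`. So, for `X = diagonal x`,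
`Y = diagonal y` and `G = P * J`, the matrix `(X - Y) * G` is nilpotent as soon as the orbit
products of `x - y` vanish. If `P ≠ 1` and `X`, `Y` in `J_K` have the same determinant, then
`x` and `y` have the same orbit products. As `m` is odd, the signs `x` and `y` cannot be opposite
along a whole orbit, so `x - y` vanishes somewhere on every orbit.
-/

theorem prod_sub_eq_zero_of_sq_eq_sq {α R : Type*} [CommRing R] [IsAddTorsionFree R]
    {s : Finset α} {x y : α → R} (hs : Odd s.card) (hsq : ∀ i ∈ s, x i ^ 2 = y i ^ 2)
    (hprod : ∏ i ∈ s, x i = ∏ i ∈ s, y i) (hy : IsUnit (∏ i ∈ s, y i)) :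
    ∏ i ∈ s, (x i - y i) = 0 := by
  have hfactor : ∀ i ∈ s, (x i - y i) * x i = -((x i - y i) * y i) := fun i hi => by
    linear_combination hsq i hi
  have hneg : (∏ i ∈ s, (x i - y i)) * ∏ i ∈ s, y i =
      -((∏ i ∈ s, (x i - y i)) * ∏ i ∈ s, y i) :=
    calc (∏ i ∈ s, (x i - y i)) * ∏ i ∈ s, y i
      _ = ∏ i ∈ s, (x i - y i) * x i := by rw [← hprod, Finset.prod_mul_distrib]
      _ = ∏ i ∈ s, -((x i - y i) * y i) := Finset.prod_congr rfl hfactor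
      _ = -((∏ i ∈ s, (x i - y i)) * ∏ i ∈ s, y i) := by
        rw [Finset.prod_neg, hs.neg_one_pow, neg_one_mul, Finset.prod_mul_distrib]
  exact hy.mul_left_eq_zero.mp (self_eq_neg.mp hneg)

section Matrix

variable {ι R : Type*} [Fintype ι]

theorem isDiag_mul [NonUnitalNonAssocSemiring R] {A B : Matrix ι ι R} (hA : A.IsDiag)
    (hB : B.IsDiag) : (A * B).IsDiag := by
  classical
  rw [← hA.diagonal_diag, ← hB.diagonal_diag, diagonal_mul_diagonal]
  exact isDiag_diagonal _

variable [DecidableEq ι]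

theorem diagonal_mul_permMatrixHom [Semiring R] (σ : Equiv.Perm ι) (d : ι → R) :
    diagonal d * permMatrixHom σ = permMatrixHom σ * diagonal (d ∘ σ) := by
  ext i j
  by_cases h : i = σ j <;>
    simp [diagonal_mul, mul_diagonal, PEquiv.toMatrix_apply, Equiv.symm_apply_eq, h]

theorem permMatrixHom_mul_diagonal_pow [CommSemiring R] (σ : Equiv.Perm ι) (d : ι → R) (m : ℕ) :
    (permMatrixHom σ * diagonal d) ^ m =
      permMatrixHom σ ^ m * diagonal (∏ k ∈ Finset.range m, d ∘ ⇑(σ ^ k)) := by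
  induction m with
  | zero => simp
  | succ m ih =>
    rw [pow_succ', ih, mul_assoc, ← mul_assoc (diagonal d), ← map_pow, diagonal_mul_permMatrixHom,
      mul_assoc, ← mul_assoc, map_pow, ← pow_succ', diagonal_mul_diagonal',
      Finset.prod_range_succ_comm, Pi.mul_def]

theorem inv_permMatrixHom_mul_diagonal_mul [CommRing R] (σ : Equiv.Perm ι) (d : ι → R) :
    (permMatrixHom σ)⁻¹ * diagonal d * permMatrixHom σ = diagonal (d ∘ σ) := by
  have hinv : (permMatrixHom σ : Matrix ι ι R)⁻¹ * permMatrixHom σ = 1 :=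
    nonsing_inv_mul _ ((isUnit_iff_isUnit_det _).mp ((Group.isUnit σ).map permMatrixHom))
  rw [mul_assoc, diagonal_mul_permMatrixHom, ← mul_assoc, hinv, one_mul]

theorem eq_one_of_isDiag_permMatrixHom_mul_diagonal [Semiring R] {σ : Equiv.Perm ι} {d : ι → R}
    (hd : ∀ i, d i ≠ 0) (h : (permMatrixHom σ * diagonal d).IsDiag) : σ = 1 := by
  ext j
  by_contra hne
  have hentry : d j = 0 := by simpa [mul_diagonal, PEquiv.toMatrix_apply] using h hne
  exact hd j hentry

end Matrix

variable {n : ℕ}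

theorem permMat_eq_permMatrixHom (σ : Equiv.Perm (Fin n)) : permMat σ = permMatrixHom σ := by
  ext i j
  simp [permMat, PEquiv.toMatrix_apply, Equiv.symm_apply_eq]

theorem avgMat_permMatrixHom_diagonal (σ : Equiv.Perm (Fin n)) (d : Fin n → ℂ) :
    avgMat (permMatrixHom σ) (diagonal d) =
      diagonal (∏ k ∈ Finset.range (orderOf (permMatrixHom σ : Mat n)), d ∘ ⇑(σ ^ k)) := by
  simp only [avgMat, ← map_pow, inv_permMatrixHom_mul_diagonal_mul]
  exact List.prod_map_hom _ (fun k : ℕ => d ∘ ⇑(σ ^ k)) (diagonalRingHom (Fin n) ℂ)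

theorem IsPermMat.mul_pow_orderOf_eq_avgMat {P D : Mat n} (hP : IsPermMat P) (hD : D.IsDiag) :
    (P * D) ^ orderOf P = avgMat P D := by
  obtain ⟨σ, rfl⟩ := hP
  rw [permMat_eq_permMatrixHom, ← hD.diagonal_diag, permMatrixHom_mul_diagonal_pow,
    pow_orderOf_eq_one, one_mul, avgMat_permMatrixHom_diagonal]

theorem IsPermMat.avgMat_mul {P D E : Mat n} (hP : IsPermMat P) (hD : D.IsDiag) (hE : E.IsDiag) :
    avgMat P (D * E) = avgMat P D * avgMat P E := by
  obtain ⟨σ, rfl⟩ := hP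
  rw [permMat_eq_permMatrixHom, ← hD.diagonal_diag, ← hE.diagonal_diag, diagonal_mul_diagonal']
  simp only [avgMat_permMatrixHom_diagonal, diagonal_mul_diagonal', ← Pi.mul_def, Pi.mul_comp,
    Finset.prod_mul_distrib]

theorem IsSignedDiag.isDiag {M : Mat n} (hM : IsSignedDiag M) : M.IsDiag := by
  obtain ⟨d, -, rfl⟩ := hM
  exact isDiag_diagonal d

theorem IsSignedDiag.exists_sq_eq_one {M : Mat n} (hM : IsSignedDiag M) :
    ∃ d : Fin n → ℂ, d ^ 2 = 1 ∧ M = diagonal d := by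
  obtain ⟨d, hd, rfl⟩ := hM
  exact ⟨d, funext fun i => sq_eq_one_iff.mpr (hd i), rfl⟩

theorem IsPermMat.avgMat_sub_eq_zero {P X Y : Mat n} (hP : IsPermMat P) (hodd : Odd (orderOf P))
    (hX : IsSignedDiag X) (hY : IsSignedDiag Y) (havg : avgMat P X = avgMat P Y) :
    avgMat P (X - Y) = 0 := by
  obtain ⟨σ, rfl⟩ := hP
  obtain ⟨x, hx, rfl⟩ := hX.exists_sq_eq_one
  obtain ⟨y, hy, rfl⟩ := hY.exists_sq_eq_one
  rw [permMat_eq_permMatrixHom] at hodd havg ⊢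
  have hcomp {d : Fin n → ℂ} (hd : d ^ 2 = 1) (k : ℕ) : (d ∘ ⇑(σ ^ k)) ^ 2 = 1 :=
    (Pi.pow_comp d 2 _).symm.trans (congrArg (· ∘ ⇑(σ ^ k)) hd)
  rw [avgMat_permMatrixHom_diagonal, avgMat_permMatrixHom_diagonal] at havg
  rw [diagonal_sub x y, ← Pi.sub_def, avgMat_permMatrixHom_diagonal, diagonal_eq_zero]
  simp only [Pi.sub_comp]
  refine prod_sub_eq_zero_of_sq_eq_sq (by rwa [Finset.card_range])
    (fun k _ => (hcomp hx k).trans (hcomp hy k).symm) (diagonal_injective havg) ?_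
  exact Finset.prod_induction _ IsUnit (fun _ _ => IsUnit.mul) isUnit_one
    fun k _ => IsUnit.of_pow_eq_one (hcomp hy k) two_ne_zero

theorem IsPermMat.isNilpotent_mul_mul {P D E : Mat n} (hP : IsPermMat P) (hD : D.IsDiag)
    (hE : E.IsDiag) (havg : avgMat P D = 0) : IsNilpotent (D * (P * E)) := by
  have hpow : (P * E * D) ^ orderOf P = 0 := by
    rw [mul_assoc, hP.mul_pow_orderOf_eq_avgMat (isDiag_mul hE hD), hP.avgMat_mul hE hD,
      havg, mul_zero]
  refine ⟨orderOf P + 1, ?_⟩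
  rw [pow_succ, ← mul_assoc, mul_pow_mul, hpow, mul_zero, zero_mul]

theorem mem_Jset_of_isDiag {K : Set (Mat n)} (hK : ∀ A ∈ K, IsPermMat A) {X : Mat n}
    (hX : ∃ C ∈ K, ∃ J ∈ Jset K, X = C * J) (hXd : X.IsDiag) : X ∈ Jset K := by
  obtain ⟨C, hC, J, hJ, rfl⟩ := hX
  obtain ⟨σ, rfl⟩ := hK C hC
  obtain ⟨d, hd, rfl⟩ := hJ.1.exists_sq_eq_one
  rw [permMat_eq_permMatrixHom] at hXd ⊢
  have hne : ∀ i, d i ≠ 0 := fun i h => by simpa [h] using congrFun hd i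
  rwa [eq_one_of_isDiag_permMatrixHom_mul_diagonal hne hXd, map_one, one_mul]

theorem cycMat_eq_permMat_finRotate (n : ℕ) : cycMat n = permMat (finRotate n) := by
  ext i j
  have := j.neZero
  simp [cycMat, permMat, Fin.ext_iff, Fin.val_add]

theorem finRotate_pow_self (n : ℕ) : finRotate n ^ n = 1 := by
  ext i
  have := i.neZero
  have hrot : ⇑(finRotate n) = (· + 1) := funext finRotate_apply
  have hcard : n • (1 : Fin n) = 0 := by simpa using card_nsmul_eq_zero (x := (1 : Fin n))
  rw [← Equiv.Perm.iterate_eq_pow, hrot, add_right_iterate, hcard]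
  simp

theorem isPermMat_of_mem_cycSet {C : Mat n} (hC : C ∈ cycSet n) : IsPermMat C := by
  obtain ⟨k, rfl⟩ := hC
  refine ⟨finRotate n ^ k, ?_⟩
  rw [cycMat_eq_permMat_finRotate, permMat_eq_permMatrixHom, permMat_eq_permMatrixHom, map_pow]

theorem orderOf_dvd_of_mem_cycSet {C : Mat n} (hC : C ∈ cycSet n) : orderOf C ∣ n := by
  obtain ⟨k, rfl⟩ := hC
  apply orderOf_dvd_of_pow_eq_one
  rw [cycMat_eq_permMat_finRotate, permMat_eq_permMatrixHom, pow_right_comm, ← map_pow,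
    finRotate_pow_self, map_one, one_pow]

theorem stmt17_general {K : Set (Mat n)} (hperm : ∀ C ∈ K, IsPermMat C)
    (hodd : ∀ C ∈ K, Odd (orderOf C)) {G X Y : Mat n}
    (hG : ∃ C ∈ K, ∃ J ∈ Jset K, G = C * J)
    (hX : ∃ C ∈ K, ∃ J ∈ Jset K, X = C * J)
    (hY : ∃ C ∈ K, ∃ J ∈ Jset K, Y = C * J)
    (hGnd : ¬ G.IsDiag) (hXd : X.IsDiag) (hYd : Y.IsDiag) (hdet : X.det = Y.det) :
    IsNilpotent ((X - Y) * G) := by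
  obtain ⟨C, hC, J, ⟨hJ, -⟩, rfl⟩ := hG
  obtain ⟨hXs, hXavg⟩ := mem_Jset_of_isDiag hperm hX hXd
  obtain ⟨hYs, hYavg⟩ := mem_Jset_of_isDiag hperm hY hYd
  have hC1 : C ≠ 1 := by
    rintro rfl
    exact hGnd (by rw [one_mul]; exact hJ.isDiag)
  have havg : avgMat C X = avgMat C Y := by rw [hXavg C hC hC1, hYavg C hC hC1, hdet]
  exact (hperm C hC).isNilpotent_mul_mul (hXd.sub hYd) hJ.isDiag
    ((hperm C hC).avgMat_sub_eq_zero (hodd C hC) hXs hYs havg)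

/-- Let `n` be odd and `𝒢 = 𝒞_n·J_n`. If `G ∈ 𝒢` is not diagonal and
`X, Y ∈ 𝒢` are diagonal with `det X = det Y`, then `(X - Y)·G` is nilpotent. -/
theorem stmt17 {n : ℕ} (hodd : Odd n)
    (G X Y : Mat n)
    (hG : G ∈ {M : Mat n | ∃ C ∈ cycSet n, ∃ J ∈ Jset (cycSet n), M = C * J})
    (hX : X ∈ {M : Mat n | ∃ C ∈ cycSet n, ∃ J ∈ Jset (cycSet n), M = C * J})
    (hY : Y ∈ {M : Mat n | ∃ C ∈ cycSet n, ∃ J ∈ Jset (cycSet n), M = C * J})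
    (hGnd : ¬ G.IsDiag) (hXd : X.IsDiag) (hYd : Y.IsDiag)
    (hdet : X.det = Y.det) :
    IsNilpotent ((X - Y) * G) := by
  exact stmt17_general (fun _ => isPermMat_of_mem_cycSet)
    (fun _ hC => hodd.of_dvd_nat (orderOf_dvd_of_mem_cycSet hC)) hG hX hY hGnd hXd hYd hdet
end
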